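/- arXiv:2501.10599 — 2 statements merged into one kernel-verified Lean document; each statement's English description precedes it below -/
import Mathlib

section
/- Let p > 1 and a, b, L, μ, ν > 0, and let u be a nontrivial C¹ weak solution of −Δ^{a,b}_p u = μ (u⁺)^{p−1} − ν (u⁻)^{p−1} on (0,L) with u(0) = u(L) = 0. Then all zeroes of u are simple: the set {t ∈ [0,L] : u(t) = 0} is finite, and u'(z) ≠ 0 for every z ∈ [0,L] with u(z) = 0. -/
open Set

/-- `u` is C¹ on `[α, γ]` with derivative `u'` there. -/
def C1On (α γ : ℝ) (u u' : ℝ → ℝ) : Prop :=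
  (∀ t ∈ Set.Icc α γ, HasDerivWithinAt u (u' t) (Set.Icc α γ) t) ∧
  ContinuousOn u' (Set.Icc α γ)

/-- Admissible functions on `[0, L]`: C¹ with zero boundary values. -/
def Adm (L : ℝ) (u u' : ℝ → ℝ) : Prop :=
  C1On 0 L u u' ∧ u 0 = 0 ∧ u L = 0

/-- The asymmetric energy integrand `a^p (s⁺)^p + b^p (s⁻)^p`. -/
noncomputable def asymE (p a b s : ℝ) : ℝ :=
  a ^ p * (max s 0) ^ p + b ^ p * (max (-s) 0) ^ p

/-- The asymmetric flux `a^p (s⁺)^(p-1) - b^p (s⁻)^(p-1)`. -/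
noncomputable def asymFlux (p a b s : ℝ) : ℝ :=
  a ^ p * (max s 0) ^ (p - 1) - b ^ p * (max (-s) 0) ^ (p - 1)

/-- The first Dirichlet eigenvalue `λ^{a,b}_{1,p}(0,L)`, as the infimum of the
asymmetric energy over normalized admissible functions. -/
noncomputable def lam1 (p a b L : ℝ) : ℝ :=
  sInf { E : ℝ | ∃ u u' : ℝ → ℝ, Adm L u u' ∧
    (∫ t in (0:ℝ)..L, |u t| ^ p) = 1 ∧
    E = ∫ t in (0:ℝ)..L, asymE p a b (u' t) }

/-- `u` (a C¹ function on `[0,L]` with derivative `u'` and zero boundary values)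
is a weak solution of `-Δ^{a,b}_p u = g` on `(0,L)`. -/
def IsWeakSol (p a b L : ℝ) (u u' g : ℝ → ℝ) : Prop :=
  Adm L u u' ∧
  ∀ φ φ' : ℝ → ℝ, Adm L φ φ' →
    (∫ t in (0:ℝ)..L, asymFlux p a b (u' t) * φ' t) =
      ∫ t in (0:ℝ)..L, g t * φ t

/-!
By the du Bois-Reymond lemma the momentum `V = Φ(u')`, where `Φ` is the asymmetric flux, is
differentiable in the classical sense with `V' = -f(u)`. As `Φ` has a continuous inverse, again an
asymmetric power, the equation becomes the Hamiltonian system `u' = Φ⁻¹(V)`, `V' = -f(u)`, whose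
energy `K(V) + F(u)`, with `K' = Φ⁻¹` and `F' = f`, is conserved. The energy is minimal at
`u = V = 0` and larger wherever `u ≠ 0`, so a solution with a double zero vanishes identically.
Zeros of `u` are therefore simple, hence isolated, and by compactness there are finitely many.

The function `K` is the Legendre transform of the energy density. Expressing the energy in `V`
rather than `u'` matters because `u'` need not be differentiable.
-/

open MeasureTheory Filter Topology

/-- The asymmetric signed power `c (s⁺)^r - d (s⁻)^r`: it covers the flux, its inverse and the
right-hand side of the equation at once. Beware of `r = 0`, where `0 ^ 0 = 1` makes it the
constant `c - d`. -/
noncomputable def asymPow (r c d s : ℝ) : ℝ :=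
  c * s⁺ ^ r - d * s⁻ ^ r

/-- The primitive `(c (s⁺)^(r+1) + d (s⁻)^(r+1)) / (r+1)` of `asymPow r c d`, serving both as
potential and as kinetic energy. -/
noncomputable def asymPowPrimitive (r c d s : ℝ) : ℝ :=
  (c * s⁺ ^ (r + 1) + d * s⁻ ^ (r + 1)) / (r + 1)

/-- `φ`, with derivative `φ'`, is a test function on `[α, β]`: it is C¹ up to the boundary and
vanishes at both endpoints. `Adm L` is `IsTestFun 0 L`. -/
def IsTestFun (α β : ℝ) (φ φ' : ℝ → ℝ) : Prop :=
  C1On α β φ φ' ∧ φ α = 0 ∧ φ β = 0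

theorem hasDerivAt_posPart_rpow {q : ℝ} (hq : 1 < q) (x : ℝ) :
    HasDerivAt (fun y : ℝ ↦ y⁺ ^ q) (q * x⁺ ^ (q - 1)) x := by
  have hcont {s : ℝ} (hs : 0 ≤ s) : Continuous fun y : ℝ ↦ y⁺ ^ s :=
    continuous_posPart.rpow_const fun _ ↦ Or.inr hs
  have hasDerivAt_of_ne (y : ℝ) (hy : y ≠ 0) :
      HasDerivAt (fun y : ℝ ↦ y⁺ ^ q) (q * y⁺ ^ (q - 1)) y := by
    rcases hy.lt_or_gt with hneg | hpos
    · have hzero : (fun y : ℝ ↦ y⁺ ^ q) =ᶠ[𝓝 y] fun _ ↦ 0 := by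
        filter_upwards [Iio_mem_nhds hneg] with z hz
        rw [posPart_eq_zero.2 (mem_Iio.1 hz).le, Real.zero_rpow (by linarith)]
      rw [posPart_eq_zero.2 hneg.le, Real.zero_rpow (by linarith), mul_zero]
      exact (hasDerivAt_const y 0).congr_of_eventuallyEq hzero
    · have hself : (fun y : ℝ ↦ y⁺ ^ q) =ᶠ[𝓝 y] fun y ↦ y ^ q := by
        filter_upwards [Ioi_mem_nhds hpos] with z hz
        rw [posPart_eq_self.2 (mem_Ioi.1 hz).le]
      rw [posPart_eq_self.2 hpos.le]
      exact (Real.hasDerivAt_rpow_const (Or.inr hq.le)).congr_of_eventuallyEq hself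
  exact hasDerivAt_of_hasDerivAt_of_ne' hasDerivAt_of_ne (hcont (by linarith)).continuousAt
    (continuous_const.mul (hcont (by linarith))).continuousAt x

section AsymPow

variable {r c d : ℝ}

theorem continuous_asymPow (hr : 0 ≤ r) : Continuous (asymPow r c d) := by
  have hpos : Continuous fun s : ℝ ↦ s⁺ ^ r :=
    continuous_posPart.rpow_const fun _ ↦ Or.inr hr
  have hneg : Continuous fun s : ℝ ↦ s⁻ ^ r :=
    continuous_negPart.rpow_const fun _ ↦ Or.inr hr
  exact (continuous_const.mul hpos).sub (continuous_const.mul hneg)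

theorem asymPow_of_nonneg (hr : r ≠ 0) {s : ℝ} (hs : 0 ≤ s) : asymPow r c d s = c * s ^ r := by
  rw [asymPow, posPart_eq_self.2 hs, negPart_eq_zero.2 hs, Real.zero_rpow hr, mul_zero, sub_zero]

theorem asymPow_neg (s : ℝ) : asymPow r c d (-s) = -asymPow r d c s := by
  simp only [asymPow, posPart_neg, negPart_neg, neg_sub]

theorem asymPow_zero (hr : r ≠ 0) : asymPow r c d 0 = 0 := by
  rw [asymPow_of_nonneg hr le_rfl, Real.zero_rpow hr, mul_zero]

theorem leftInverse_asymPow (hr : r ≠ 0) (hc : 0 < c) (hd : 0 < d) :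
    Function.LeftInverse (asymPow r⁻¹ (c⁻¹ ^ r⁻¹) (d⁻¹ ^ r⁻¹)) (asymPow r c d) := by
  have of_nonneg {c d s : ℝ} (hc : 0 < c) (hs : 0 ≤ s) :
      asymPow r⁻¹ (c⁻¹ ^ r⁻¹) (d⁻¹ ^ r⁻¹) (asymPow r c d s) = s := by
    have hsr : 0 ≤ c * s ^ r := mul_nonneg hc.le (Real.rpow_nonneg hs r)
    rw [asymPow_of_nonneg hr hs, asymPow_of_nonneg (inv_ne_zero hr) hsr,
      ← Real.mul_rpow (inv_pos.2 hc).le hsr, inv_mul_cancel_left₀ hc.ne',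
      Real.rpow_rpow_inv hs hr]
  intro s
  rcases le_total 0 s with hs | hs
  · exact of_nonneg hc hs
  · rw [← neg_neg s, asymPow_neg, asymPow_neg, of_nonneg hd (neg_nonneg.2 hs)]

theorem hasDerivAt_asymPowPrimitive (hr : 0 < r) (s : ℝ) :
    HasDerivAt (asymPowPrimitive r c d) (asymPow r c d s) s := by
  have hr1 : 1 < r + 1 := by linarith
  have hpos := (hasDerivAt_posPart_rpow hr1 s).const_mul c
  have hneg := ((hasDerivAt_posPart_rpow hr1 (-s)).comp s (hasDerivAt_neg s)).const_mul d
  refine ((hpos.add hneg).div_const (r + 1)).congr_deriv ?_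
  rw [asymPow, posPart_neg, add_sub_cancel_right]
  field_simp
  ring

theorem asymPowPrimitive_zero (hr : r + 1 ≠ 0) : asymPowPrimitive r c d 0 = 0 := by
  simp only [asymPowPrimitive, posPart_zero, negPart_zero, Real.zero_rpow hr, mul_zero, add_zero,
    zero_div]

theorem asymPowPrimitive_zero_le (hr : 0 < r + 1) (hc : 0 ≤ c) (hd : 0 ≤ d) (s : ℝ) :
    asymPowPrimitive r c d 0 ≤ asymPowPrimitive r c d s := by
  rw [asymPowPrimitive_zero hr.ne', asymPowPrimitive]
  exact div_nonneg (add_nonneg (mul_nonneg hc (Real.rpow_nonneg (posPart_nonneg s) _))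
    (mul_nonneg hd (Real.rpow_nonneg (negPart_nonneg s) _))) hr.le

theorem asymPowPrimitive_zero_lt (hr : 0 < r + 1) (hc : 0 < c) (hd : 0 < d) {s : ℝ}
    (hs : s ≠ 0) : asymPowPrimitive r c d 0 < asymPowPrimitive r c d s := by
  rw [asymPowPrimitive_zero hr.ne', asymPowPrimitive]
  refine div_pos ?_ hr
  rcases hs.lt_or_gt with hneg | hpos
  · exact add_pos_of_nonneg_of_pos (mul_nonneg hc.le (Real.rpow_nonneg (posPart_nonneg s) _))
      (mul_pos hd (Real.rpow_pos_of_pos (negPart_pos hneg) _))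
  · exact add_pos_of_pos_of_nonneg (mul_pos hc (Real.rpow_pos_of_pos (posPart_pos hpos) _))
      (mul_nonneg hd.le (Real.rpow_nonneg (negPart_nonneg s) _))

end AsymPow

section DuBoisReymond

variable {α β : ℝ} {f g w : ℝ → ℝ}

theorem c1On_integral (hf : ContinuousOn f (Icc α β)) :
    C1On α β (fun t ↦ ∫ s in α..t, f s) f := by
  refine ⟨fun t ht ↦ ?_, hf⟩
  have := Fact.mk ht
  have hint : IntervalIntegrable f volume α t :=
    (hf.mono (Icc_subset_Icc_right ht.2)).intervalIntegrable_of_Icc ht.1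
  exact intervalIntegral.integral_hasDerivWithinAt_right hint
    (hf.stronglyMeasurableAtFilter_nhdsWithin measurableSet_Icc t) (hf t ht)

theorem eqOn_zero_of_integral_sq_eq_zero (hαβ : α < β) (hf : ContinuousOn f (Icc α β))
    (h : ∫ t in α..β, f t ^ 2 = 0) : EqOn f 0 (Icc α β) := by
  intro t ht
  by_contra hft
  exact h.not_gt <| intervalIntegral.integral_pos hαβ (hf.pow 2)
    (fun _ _ ↦ sq_nonneg _) ⟨t, ht, sq_pos_iff.2 hft⟩

theorem exists_eqOn_const_of_integral_mul_deriv_eq_zero (hαβ : α < β)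
    (hf : ContinuousOn f (Icc α β))
    (h : ∀ φ φ', IsTestFun α β φ φ' → ∫ t in α..β, f t * φ' t = 0) :
    ∃ c, EqOn f (fun _ ↦ c) (Icc α β) := by
  have hfint : IntervalIntegrable f volume α β := hf.intervalIntegrable_of_Icc hαβ.le
  obtain ⟨c, hc⟩ : ∃ c, ∫ t in α..β, (f t - c) = 0 := by
    refine ⟨(∫ t in α..β, f t) / (β - α), ?_⟩
    rw [intervalIntegral.integral_sub hfint intervalIntegrable_const,
      intervalIntegral.integral_const, smul_eq_mul, mul_div_cancel₀ _ (sub_ne_zero.2 hαβ.ne'),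
      sub_self]
  have hfc : ContinuousOn (fun t ↦ f t - c) (Icc α β) := hf.sub continuousOn_const
  have horth : ∫ t in α..β, f t * (f t - c) = 0 :=
    h _ _ ⟨c1On_integral hfc, intervalIntegral.integral_same, hc⟩
  have hffc : IntervalIntegrable (fun t ↦ f t * (f t - c)) volume α β :=
    (hf.mul hfc).intervalIntegrable_of_Icc hαβ.le
  have hsq : ∫ t in α..β, (f t - c) ^ 2 = 0 := calc
    ∫ t in α..β, (f t - c) ^ 2 = ∫ t in α..β, (f t * (f t - c) - c * (f t - c)) := by
      congr! 2 with t
      ring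
    _ = (∫ t in α..β, f t * (f t - c)) - c * ∫ t in α..β, (f t - c) := by
      rw [intervalIntegral.integral_sub hffc
        ((hfc.intervalIntegrable_of_Icc hαβ.le).const_mul c),
        intervalIntegral.integral_const_mul]
    _ = 0 := by rw [horth, hc, mul_zero, sub_zero]
  exact ⟨c, fun t ht ↦ sub_eq_zero.1 (eqOn_zero_of_integral_sq_eq_zero hαβ hfc hsq ht)⟩

theorem integral_mul_eq_neg_of_isTestFun (hαβ : α ≤ β) {G φ φ' : ℝ → ℝ} (hG : C1On α β G g)
    (hφ : IsTestFun α β φ φ') :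
    ∫ t in α..β, g t * φ t = -∫ t in α..β, G t * φ' t := by
  obtain ⟨⟨hφd, hφc⟩, hφα, hφβ⟩ := hφ
  have hparts := intervalIntegral.integral_mul_deriv_eq_deriv_mul_of_hasDerivWithinAt
    (u := G) (v := φ) (u' := g) (v' := φ')
    (by rw [uIcc_of_le hαβ]; exact hG.1) (by rw [uIcc_of_le hαβ]; exact hφd)
    (hG.2.intervalIntegrable_of_Icc hαβ) (hφc.intervalIntegrable_of_Icc hαβ)
  rw [hparts, hφα, hφβ]
  ring

theorem hasDerivWithinAt_of_integral_mul_deriv_eq (hαβ : α < β)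
    (hw : ContinuousOn w (Icc α β)) (hg : ContinuousOn g (Icc α β))
    (h : ∀ φ φ', IsTestFun α β φ φ' →
      ∫ t in α..β, w t * φ' t = ∫ t in α..β, g t * φ t) :
    ∀ t ∈ Icc α β, HasDerivWithinAt w (-g t) (Icc α β) t := by
  set G : ℝ → ℝ := fun t ↦ ∫ s in α..t, g s
  have hG : C1On α β G g := c1On_integral hg
  have hGc : ContinuousOn G (Icc α β) := fun t ht ↦ (hG.1 t ht).continuousWithinAt
  have horth (φ φ' : ℝ → ℝ) (hφ : IsTestFun α β φ φ') :
      ∫ t in α..β, (w t + G t) * φ' t = 0 := by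
    have hint {v : ℝ → ℝ} (hv : ContinuousOn v (Icc α β)) :
        IntervalIntegrable (fun t ↦ v t * φ' t) volume α β :=
      (hv.mul hφ.1.2).intervalIntegrable_of_Icc hαβ.le
    simp only [add_mul]
    rw [intervalIntegral.integral_add (hint hw) (hint hGc), h φ φ' hφ,
      integral_mul_eq_neg_of_isTestFun hαβ.le hG hφ, neg_add_cancel]
  obtain ⟨c, hc⟩ := exists_eqOn_const_of_integral_mul_deriv_eq_zero hαβ (hw.add hGc) horth
  have hwG : EqOn w (fun t ↦ c - G t) (Icc α β) := fun t ht ↦ eq_sub_of_add_eq (hc ht)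
  exact fun t ht ↦ ((hG.1 t ht).const_sub c).congr hwG (hwG ht)

end DuBoisReymond

section Hamiltonian

variable {s : Set ℝ} {K k F f u V : ℝ → ℝ}

theorem hamiltonian_eq (hs : Convex ℝ s)
    (hK : ∀ y, HasDerivAt K (k y) y) (hF : ∀ x, HasDerivAt F (f x) x)
    (hu : ∀ t ∈ s, HasDerivWithinAt u (k (V t)) s t)
    (hV : ∀ t ∈ s, HasDerivWithinAt V (-f (u t)) s t) {t₀ t : ℝ} (ht₀ : t₀ ∈ s) (ht : t ∈ s) :
    K (V t) + F (u t) = K (V t₀) + F (u t₀) := by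
  have hderiv (x : ℝ) (hx : x ∈ s) :
      HasDerivWithinAt (fun t ↦ K (V t) + F (u t)) 0 s x := by
    refine (((hK _).comp_hasDerivWithinAt x (hV x hx)).add
      ((hF _).comp_hasDerivWithinAt x (hu x hx))).congr_deriv ?_
    ring
  have hdist := hs.norm_image_sub_le_of_norm_hasDerivWithin_le (C := 0) hderiv
    (fun _ _ ↦ norm_zero.le) ht₀ ht
  rw [zero_mul] at hdist
  exact sub_eq_zero.1 (norm_le_zero_iff.1 hdist)

theorem eqOn_zero_of_hamiltonian (hs : Convex ℝ s)
    (hK : ∀ y, HasDerivAt K (k y) y) (hF : ∀ x, HasDerivAt F (f x) x)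
    (hKmin : ∀ y, K 0 ≤ K y) (hFmin : ∀ x, x ≠ 0 → F 0 < F x)
    (hu : ∀ t ∈ s, HasDerivWithinAt u (k (V t)) s t)
    (hV : ∀ t ∈ s, HasDerivWithinAt V (-f (u t)) s t)
    {z : ℝ} (hz : z ∈ s) (huz : u z = 0) (hVz : V z = 0) : EqOn u 0 s := by
  intro t ht
  by_contra hut
  have henergy := hamiltonian_eq hs hK hF hu hV hz ht
  rw [huz, hVz] at henergy
  linarith [hKmin (V t), hFmin (u t) hut]

end Hamiltonian

theorem finite_setOf_eq_zero_of_hasDerivWithinAt_ne_zero {𝕜 E : Type*}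
    [NontriviallyNormedField 𝕜] [NormedAddCommGroup E] [NormedSpace 𝕜 E] {s : Set 𝕜}
    {f f' : 𝕜 → E} (hs : IsCompact s) (hf : ∀ x ∈ s, HasDerivWithinAt f (f' x) s x)
    (hf' : ∀ x ∈ s, f x = 0 → f' x ≠ 0) : {x ∈ s | f x = 0}.Finite := by
  have hcont : ContinuousOn f s := fun x hx ↦ (hf x hx).continuousWithinAt
  have hclosed : IsClosed {x ∈ s | f x = 0} :=
    hcont.preimage_isClosed_of_isClosed hs.isClosed isClosed_singleton
  by_contra hinf
  obtain ⟨z, ⟨hzs, hz⟩, hacc⟩ := Set.Infinite.exists_accPt_of_subset_isCompact hinf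
    (hs.of_isClosed_subset hclosed (sep_subset _ _)) Subset.rfl
  have hisolated := (hf z hzs).eventually_ne (c := 0) (hf' z hzs hz)
  rw [eventually_nhdsWithin_iff] at hisolated
  obtain ⟨y, ⟨hyz, hys, hy⟩, hne⟩ :=
    ((accPt_iff_frequently.1 hacc).and_eventually hisolated).exists
  exact hne ⟨hys, hyz⟩ hy

theorem asymFlux_eq_asymPow (p a b : ℝ) : asymFlux p a b = asymPow (p - 1) (a ^ p) (b ^ p) := rfl

theorem stmt13_general {p a b α β : ℝ} (hp : 1 < p) (ha : 0 < a) (hb : 0 < b) (hαβ : α < β)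
    {f F : ℝ → ℝ} (hf : Continuous f) (hF : ∀ x, HasDerivAt F (f x) x)
    (hFmin : ∀ x, x ≠ 0 → F 0 < F x) {u u' : ℝ → ℝ} (hu : C1On α β u u')
    (hsol : ∀ φ φ', IsTestFun α β φ φ' →
      ∫ t in α..β, asymFlux p a b (u' t) * φ' t = ∫ t in α..β, f (u t) * φ t)
    (hne : ∃ t ∈ Icc α β, u t ≠ 0) :
    {t ∈ Icc α β | u t = 0}.Finite ∧ ∀ z ∈ Icc α β, u z = 0 → u' z ≠ 0 := by
  have hr : 0 < p - 1 := sub_pos.2 hp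
  have hap : 0 < a ^ p := Real.rpow_pos_of_pos ha p
  have hbp : 0 < b ^ p := Real.rpow_pos_of_pos hb p
  have huc : ContinuousOn u (Icc α β) := fun t ht ↦ (hu.1 t ht).continuousWithinAt
  rw [asymFlux_eq_asymPow] at hsol
  set V : ℝ → ℝ := fun t ↦ asymPow (p - 1) (a ^ p) (b ^ p) (u' t)
  have hV : ∀ t ∈ Icc α β, HasDerivWithinAt V (-f (u t)) (Icc α β) t :=
    hasDerivWithinAt_of_integral_mul_deriv_eq hαβ
      ((continuous_asymPow hr.le).comp_continuousOn hu.2) (hf.comp_continuousOn huc) hsol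
  have hinv (t : ℝ) :
      asymPow (p - 1)⁻¹ ((a ^ p)⁻¹ ^ (p - 1)⁻¹) ((b ^ p)⁻¹ ^ (p - 1)⁻¹) (V t) = u' t :=
    leftInverse_asymPow hr.ne' hap hbp (u' t)
  have hsimple (z : ℝ) (hz : z ∈ Icc α β) (huz : u z = 0) : u' z ≠ 0 := by
    intro hu'z
    obtain ⟨t, ht, hut⟩ := hne
    have hVz : V z = 0 := by simp only [V, hu'z, asymPow_zero hr.ne']
    exact hut (eqOn_zero_of_hamiltonian (convex_Icc α β)
      (hasDerivAt_asymPowPrimitive (inv_pos.2 hr)) hF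
      (asymPowPrimitive_zero_le (by positivity) (by positivity) (by positivity)) hFmin
      (fun x hx ↦ (hinv x).symm ▸ hu.1 x hx) hV hz huz hVz ht)
  exact ⟨finite_setOf_eq_zero_of_hasDerivWithinAt_ne_zero isCompact_Icc hu.1 hsimple, hsimple⟩

theorem stmt13 (p a b L μ ν : ℝ) (hp : 1 < p) (ha : 0 < a) (hb : 0 < b) (hL : 0 < L)
    (hμ : 0 < μ) (hν : 0 < ν) (u u' : ℝ → ℝ)
    (hsol : IsWeakSol p a b L u u'
      (fun t => μ * (max (u t) 0) ^ (p - 1) - ν * (max (-u t) 0) ^ (p - 1)))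
    (hne : ∃ t ∈ Set.Icc (0:ℝ) L, u t ≠ 0) :
    {t ∈ Set.Icc (0:ℝ) L | u t = 0}.Finite ∧
    ∀ z ∈ Set.Icc (0:ℝ) L, u z = 0 → u' z ≠ 0 :=
  have hr : 0 < p - 1 := sub_pos.2 hp
  stmt13_general hp ha hb hL (continuous_asymPow hr.le) (hasDerivAt_asymPowPrimitive hr)
    (fun _ ↦ asymPowPrimitive_zero_lt (by positivity) hμ hν)
    hsol.1.1 hsol.2 hne
end

section
/- Let p > 1 and a, b, L, μ, ν > 0, and let u be a nontrivial C¹ weak solution of −Δ^{a,b}_p u = μ (u⁺)^{p−1} − ν (u⁻)^{p−1} on (0,L) with u(0) = u(L) = 0. If (α, β) ⊆ (0,L) is a maximal interval of positivity of u (i.e. u > 0 on (α,β) and u(α) = u(β) = 0), then μ · (β − α)^p = λ^{a,b}_{1,p}(0,1); similarly, if (α, β) is a maximal interval of negativity of u, then ν · (β − α)^p = λ^{a,b}_{1,p}(0,1). In particular all positivity intervals of u have the same length (λ^{a,b}_{1,p}(0,1)/μ)^{1/p} and all negativity intervals have the same length (λ^{a,b}_{1,p}(0,1)/ν)^{1/p}.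 -/
open Set

/-!
On a nodal interval a weak solution solves the eigenvalue equation classically: by du Bois-Reymond's
argument its flux is differentiable. Translation, dilation and, on negativity intervals, the odd
reflection `u ↦ -u(α + β - ·)`, which preserves the asymmetric operator, turn the nodal arc into a
positive eigenfunction `w` on `(0, 1)`, with the eigenvalue multiplied by `(β - α)^p`.

The eigenvalue `κ` of a positive eigenfunction is the infimum `lam1`. It is attained at the
normalised `w`. That it is a lower bound is Picone's inequality: the field
`F(w') v₊^p / w^(p-1)` has derivative at most `E(v') - κ v₊^p`, by homogeneity and convexity of the
energy `E`. Since `E` is not even, the negative part of the competitor `v` is compared with the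
reflected eigenfunction `w(α + β - ·)`, which belongs to the operator with `a` and `b` exchanged.
Replacing `v₊`, `v₋` by `(v - δ)₊`, `(-v - δ)₊` makes both fields vanish near the endpoints, where
`w` vanishes; then `δ → 0`.
-/

open Filter MeasureTheory Topology

section PositivePartPower

variable {p : ℝ}

theorem continuous_max_zero_rpow (hp : 0 ≤ p) : Continuous fun s : ℝ => max s 0 ^ p :=
  (continuous_id.max continuous_const).rpow_const fun _ => Or.inr hp

theorem hasDerivAt_max_zero_rpow (hp : 1 < p) (s : ℝ) :
    HasDerivAt (fun s : ℝ => max s 0 ^ p) (p * max s 0 ^ (p - 1)) s := by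
  refine hasDerivAt_of_hasDerivAt_of_ne' (x := 0) (fun y hy => ?_)
    (continuous_max_zero_rpow (by linarith)).continuousAt
    ((continuous_max_zero_rpow (by linarith)).const_mul p).continuousAt s
  rcases hy.lt_or_gt with hy | hy
  · rw [max_eq_right hy.le, Real.zero_rpow (by linarith), mul_zero]
    refine (hasDerivAt_const y (0 : ℝ)).congr_of_eventuallyEq ?_
    filter_upwards [Iio_mem_nhds hy] with z hz
    rw [max_eq_right (le_of_lt hz), Real.zero_rpow (by linarith)]
  · rw [max_eq_left hy.le]
    refine (Real.hasDerivAt_rpow_const (Or.inl hy.ne')).congr_of_eventuallyEq ?_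
    filter_upwards [Ioi_mem_nhds hy] with z hz
    rw [max_eq_left (le_of_lt hz)]

theorem max_zero_rpow_sub_one_mul_self (hp : 1 < p) (s : ℝ) :
    max s 0 ^ (p - 1) * s = max s 0 ^ p := by
  rcases le_total s 0 with hs | hs
  · rw [max_eq_right hs, Real.zero_rpow (by linarith), Real.zero_rpow (by linarith), zero_mul]
  · rw [max_eq_left hs, ← Real.rpow_add_one' hs (by linarith), sub_add_cancel]

theorem max_zero_mul_rpow {r : ℝ} (hr : 0 ≤ r) (s : ℝ) :
    max (r * s) 0 ^ p = r ^ p * max s 0 ^ p := by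
  rw [← Real.mul_rpow hr (le_max_right s 0), mul_max_of_nonneg _ _ hr, mul_zero]

theorem max_abs_sub_rpow (hp : p ≠ 0) {δ : ℝ} (hδ : 0 ≤ δ) (s : ℝ) :
    max (|s| - δ) 0 ^ p = max (s - δ) 0 ^ p + max (-s - δ) 0 ^ p := by
  rcases le_total 0 s with hs | hs
  · rw [abs_of_nonneg hs, max_eq_right (by linarith : -s - δ ≤ 0), Real.zero_rpow hp, add_zero]
  · rw [abs_of_nonpos hs, max_eq_right (by linarith : s - δ ≤ 0), Real.zero_rpow hp, zero_add]

theorem mul_max_zero_rpow_sub_one_mul_le (hp : 1 < p) (x y : ℝ) :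
    p * max x 0 ^ (p - 1) * y ≤ (p - 1) * max x 0 ^ p + max y 0 ^ p := by
  have hx : 0 ≤ max x 0 := le_max_right x 0
  have hp1 : p - 1 ≠ 0 := by linarith
  have young := Real.young_inequality_of_nonneg (le_max_right y 0)
    (Real.rpow_nonneg hx (p - 1)) (Real.HolderConjugate.conjExponent hp)
  rw [← Real.rpow_mul hx, Real.conjExponent, mul_div_cancel₀ p hp1] at young
  calc p * max x 0 ^ (p - 1) * y
      ≤ p * max x 0 ^ (p - 1) * max y 0 := by gcongr; exact le_max_left y 0
    _ = p * (max y 0 * max x 0 ^ (p - 1)) := by ring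
    _ ≤ p * (max y 0 ^ p / p + max x 0 ^ p / (p / (p - 1))) := by gcongr
    _ = (p - 1) * max x 0 ^ p + max y 0 ^ p := by field_simp; ring

theorem tendsto_integral_max_abs_sub_rpow (hp : 0 ≤ p) {α β : ℝ} (hαβ : α ≤ β) {v : ℝ → ℝ}
    (hv : ContinuousOn v (Icc α β)) :
    Tendsto (fun δ => ∫ t in α..β, max (|v t| - δ) 0 ^ p) (𝓝[>] 0)
      (𝓝 (∫ t in α..β, |v t| ^ p)) := by
  have hcont (δ : ℝ) : ContinuousOn (fun t => max (|v t| - δ) 0 ^ p) (Icc α β) :=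
    (continuous_max_zero_rpow hp).comp_continuousOn (hv.abs.sub continuousOn_const)
  refine intervalIntegral.tendsto_integral_filter_of_dominated_convergence (fun t => |v t| ^ p)
    (Eventually.of_forall fun δ =>
      ((hcont δ).intervalIntegrable_of_Icc hαβ).aestronglyMeasurable_restrict_uIoc) ?_
    ((hv.abs.rpow_const fun _ _ => Or.inr hp).intervalIntegrable_of_Icc hαβ)
    (Eventually.of_forall fun t _ => ?_)
  · filter_upwards [self_mem_nhdsWithin] with δ (hδ : 0 < δ)
    refine Eventually.of_forall fun t _ => ?_
    rw [Real.norm_of_nonneg (by positivity)]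
    exact Real.rpow_le_rpow (le_max_right _ _) (max_le (by linarith) (abs_nonneg _)) hp
  · have hlim : Continuous fun δ => max (|v t| - δ) 0 ^ p :=
      (continuous_max_zero_rpow hp).comp (continuous_const.sub continuous_id)
    simpa using (hlim.tendsto 0).mono_left nhdsWithin_le_nhds

end PositivePartPower

section Integrand

variable {p a b : ℝ}

theorem continuous_asymFlux (hp : 1 ≤ p) : Continuous (asymFlux p a b) :=
  have h := continuous_max_zero_rpow (sub_nonneg.2 hp)
  (h.const_mul (a ^ p)).sub ((h.comp continuous_neg).const_mul (b ^ p))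

theorem continuous_asymE (hp : 0 ≤ p) : Continuous (asymE p a b) :=
  have h := continuous_max_zero_rpow hp
  (h.const_mul (a ^ p)).add ((h.comp continuous_neg).const_mul (b ^ p))

theorem asymFlux_neg_swap (p a b s : ℝ) : asymFlux p b a (-s) = -asymFlux p a b s := by
  simp only [asymFlux, neg_neg, neg_sub]

theorem asymE_neg_swap (p a b s : ℝ) : asymE p b a (-s) = asymE p a b s := by
  simp only [asymE, neg_neg, add_comm]

theorem asymFlux_mul_self (hp : 1 < p) (s : ℝ) : asymFlux p a b s * s = asymE p a b s := by
  unfold asymFlux asymE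
  linear_combination a ^ p * max_zero_rpow_sub_one_mul_self hp s +
    b ^ p * max_zero_rpow_sub_one_mul_self hp (-s)

theorem asymE_mul {r : ℝ} (hr : 0 ≤ r) (s : ℝ) :
    asymE p a b (r * s) = r ^ p * asymE p a b s := by
  simp only [asymE, ← mul_neg, max_zero_mul_rpow hr]
  ring

theorem asymFlux_mul {r : ℝ} (hr : 0 ≤ r) (s : ℝ) :
    asymFlux p a b (r * s) = r ^ (p - 1) * asymFlux p a b s := by
  simp only [asymFlux, ← mul_neg, max_zero_mul_rpow hr]
  ring

/-- The tangent line at `x` of the convex function `asymE p a b`, evaluated at `y`. Its constant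
term is written through Euler's identity `asymE' x * x = p * asymE x`. -/
noncomputable def asymTangent (p a b x y : ℝ) : ℝ :=
  p * asymFlux p a b x * y - (p - 1) * asymE p a b x

theorem asymTangent_le_asymE (hp : 1 < p) (ha : 0 ≤ a) (hb : 0 ≤ b) (x y : ℝ) :
    asymTangent p a b x y ≤ asymE p a b y := by
  have hpos := mul_le_mul_of_nonneg_left (mul_max_zero_rpow_sub_one_mul_le hp x y)
    (Real.rpow_nonneg ha p)
  have hneg := mul_le_mul_of_nonneg_left (mul_max_zero_rpow_sub_one_mul_le hp (-x) (-y))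
    (Real.rpow_nonneg hb p)
  unfold asymTangent asymFlux asymE
  linarith

theorem asymTangent_zero_left (hp : 1 < p) (y : ℝ) : asymTangent p a b 0 y = 0 := by
  simp [asymTangent, asymFlux, asymE, Real.zero_rpow (by linarith : p ≠ 0),
    Real.zero_rpow (by linarith : p - 1 ≠ 0)]

theorem asymTangent_add_asymTangent_swap_le (hp : 1 < p) (ha : 0 ≤ a) (hb : 0 ≤ b) {x z : ℝ}
    (hxz : x = 0 ∨ z = 0) (y : ℝ) :
    asymTangent p a b x y + asymTangent p b a z (-y) ≤ asymE p a b y := by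
  rcases hxz with rfl | rfl
  · rw [asymTangent_zero_left hp, zero_add, ← asymE_neg_swap]
    exact asymTangent_le_asymE hp hb ha z (-y)
  · rw [asymTangent_zero_left hp, add_zero]
    exact asymTangent_le_asymE hp ha hb x y

end Integrand

section C1On

variable {α β : ℝ} {u u' : ℝ → ℝ}

theorem C1On.continuousOn (h : C1On α β u u') : ContinuousOn u (Icc α β) :=
  fun t ht => (h.1 t ht).continuousWithinAt

theorem C1On.hasDerivAt (h : C1On α β u u') {t : ℝ} (ht : t ∈ Ioo α β) : HasDerivAt u (u' t) t :=
  (h.1 t (Ioo_subset_Icc_self ht)).hasDerivAt (Icc_mem_nhds ht.1 ht.2)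

theorem C1On.mono {γ δ : ℝ} (h : C1On α β u u') (hsub : Icc γ δ ⊆ Icc α β) : C1On γ δ u u' :=
  ⟨fun t ht => (h.1 t (hsub ht)).mono hsub, h.2.mono hsub⟩

theorem C1On.neg (h : C1On α β u u') : C1On α β (fun t => -u t) (fun t => -u' t) :=
  ⟨fun t ht => (h.1 t ht).neg, h.2.neg⟩

theorem C1On.sub_const (h : C1On α β u u') (c : ℝ) : C1On α β (fun t => u t - c) u' :=
  ⟨fun t ht => (h.1 t ht).sub_const c, h.2⟩

theorem C1On.const_mul (h : C1On α β u u') (c : ℝ) :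
    C1On α β (fun t => c * u t) (fun t => c * u' t) :=
  ⟨fun t ht => (h.1 t ht).const_mul c, continuousOn_const.mul h.2⟩

theorem C1On.comp_of_deriv_const {γ δ l : ℝ} {f : ℝ → ℝ} (h : C1On α β u u')
    (hf : ∀ t, HasDerivAt f l t) (hmaps : MapsTo f (Icc γ δ) (Icc α β)) :
    C1On γ δ (fun t => u (f t)) (fun t => l * u' (f t)) := by
  have hf_cont : ContinuousOn f (Icc γ δ) := fun t _ => (hf t).continuousAt.continuousWithinAt
  refine ⟨fun t ht => ?_, continuousOn_const.mul (h.2.comp hf_cont hmaps)⟩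
  exact ((h.1 (f t) (hmaps ht)).comp t (hf t).hasDerivWithinAt hmaps).congr_deriv (mul_comm _ _)

theorem c1On_integral_of_continuousOn {f : ℝ → ℝ} (hf : ContinuousOn f (Icc α β)) :
    C1On α β (fun t => ∫ s in α..t, f s) f := by
  refine ⟨fun t ht => ?_, hf⟩
  have : Fact (t ∈ Icc α β) := ⟨ht⟩
  exact intervalIntegral.integral_hasDerivWithinAt_right
    ((hf.mono (Icc_subset_Icc_right ht.2)).intervalIntegrable_of_Icc ht.1)
    (hf.stronglyMeasurableAtFilter_nhdsWithin measurableSet_Icc t) (hf t ht)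

theorem C1On.integral_mul_deriv {v v' : ℝ → ℝ} (hαβ : α ≤ β) (hu : C1On α β u u')
    (hv : C1On α β v v') :
    ∫ t in α..β, u t * v' t = u β * v β - u α * v α - ∫ t in α..β, u' t * v t := by
  have huv := uIcc_of_le hαβ
  exact intervalIntegral.integral_mul_deriv_eq_deriv_mul_of_hasDerivWithinAt
    (by simpa only [huv] using hu.1) (by simpa only [huv] using hv.1)
    (hu.2.intervalIntegrable_of_Icc hαβ) (hv.2.intervalIntegrable_of_Icc hαβ)

end C1On

section DuBoisReymond

variable {L : ℝ}

theorem exists_eqOn_const_of_forall_integral_mul_deriv_eq_zero (hL : 0 < L) {F : ℝ → ℝ}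
    (hF : ContinuousOn F (Icc 0 L))
    (horth : ∀ φ φ' : ℝ → ℝ, Adm L φ φ' → ∫ t in (0 : ℝ)..L, F t * φ' t = 0) :
    ∃ c, EqOn F (fun _ => c) (Icc 0 L) := by
  set c : ℝ := (∫ t in (0 : ℝ)..L, F t) / L with hc
  have hK : ContinuousOn (fun t => F t - c) (Icc 0 L) := hF.sub continuousOn_const
  have hK_int := hK.intervalIntegrable_of_Icc (μ := volume) hL.le
  have hmean : ∫ t in (0 : ℝ)..L, (F t - c) = 0 := by
    rw [intervalIntegral.integral_sub (hF.intervalIntegrable_of_Icc hL.le)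
      intervalIntegrable_const, intervalIntegral.integral_const, hc, smul_eq_mul, sub_zero,
      mul_div_cancel₀ _ hL.ne', sub_self]
  have hFK : ∫ t in (0 : ℝ)..L, F t * (F t - c) = 0 :=
    horth _ _ ⟨c1On_integral_of_continuousOn hK, intervalIntegral.integral_same, hmean⟩
  have hsq : ∫ t in (0 : ℝ)..L, (F t - c) ^ 2 = 0 := by
    have hexp (t : ℝ) : (F t - c) ^ 2 = F t * (F t - c) - c * (F t - c) := by ring
    simp only [hexp]
    rw [intervalIntegral.integral_sub ((hF.fun_mul hK).intervalIntegrable_of_Icc hL.le)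
      (hK_int.const_mul c), intervalIntegral.integral_const_mul, hFK, hmean, mul_zero, sub_zero]
  refine ⟨c, fun t ht => by_contra fun hne => ?_⟩
  have hlt : 0 < (F t - c) ^ 2 := by have := sub_ne_zero.2 hne; positivity
  exact (intervalIntegral.integral_pos hL (hK.pow 2) (fun _ _ => sq_nonneg _) ⟨t, ht, hlt⟩).ne' hsq

theorem hasDerivAt_of_forall_integral_mul_deriv_eq (hL : 0 < L) {F g : ℝ → ℝ}
    (hF : ContinuousOn F (Icc 0 L)) (hg : ContinuousOn g (Icc 0 L))
    (hweak : ∀ φ φ' : ℝ → ℝ, Adm L φ φ' →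
      ∫ t in (0 : ℝ)..L, F t * φ' t = ∫ t in (0 : ℝ)..L, g t * φ t)
    {t : ℝ} (ht : t ∈ Ioo 0 L) : HasDerivAt F (-g t) t := by
  have hG := c1On_integral_of_continuousOn hg
  set G : ℝ → ℝ := fun t => ∫ s in (0 : ℝ)..t, g s
  obtain ⟨c, hc⟩ := exists_eqOn_const_of_forall_integral_mul_deriv_eq_zero hL
    (hF.add hG.continuousOn) fun φ φ' hφ => by
      have hparts : ∫ s in (0 : ℝ)..L, G s * φ' s = -∫ s in (0 : ℝ)..L, g s * φ s := by
        rw [hG.integral_mul_deriv hL.le hφ.1, hφ.2.1, hφ.2.2]; ring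
      simp only [Pi.add_apply, add_mul]
      rw [intervalIntegral.integral_add ((hF.fun_mul hφ.1.2).intervalIntegrable_of_Icc hL.le)
        ((hG.continuousOn.fun_mul hφ.1.2).intervalIntegrable_of_Icc hL.le), hweak φ φ' hφ, hparts,
        add_neg_cancel]
  refine ((hG.hasDerivAt ht).const_sub c).congr_of_eventuallyEq ?_
  filter_upwards [Ioo_mem_nhds ht.1 ht.2] with s hs
  exact eq_sub_of_add_eq (hc (Ioo_subset_Icc_self hs))

theorem IsWeakSol.hasDerivAt_asymFlux {p a b : ℝ} {u u' g : ℝ → ℝ} (h : IsWeakSol p a b L u u' g)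
    (hp : 1 ≤ p) (hL : 0 < L) (hg : ContinuousOn g (Icc 0 L)) {t : ℝ} (ht : t ∈ Ioo 0 L) :
    HasDerivAt (fun s => asymFlux p a b (u' s)) (-g t) t :=
  hasDerivAt_of_forall_integral_mul_deriv_eq hL
    ((continuous_asymFlux hp).comp_continuousOn h.1.1.2) hg h.2 ht

end DuBoisReymond

/-- `w`, with derivative `w'`, is a positive Dirichlet eigenfunction of `-Δ^{a,b}_p` on `(α, β)`
with eigenvalue `κ`. The equation is required in the classical sense, for the flux. -/
structure IsPosEigenfunction (p a b κ α β : ℝ) (w w' : ℝ → ℝ) : Prop where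
  c1On : C1On α β w w'
  left_eq_zero : w α = 0
  right_eq_zero : w β = 0
  pos : ∀ t ∈ Ioo α β, 0 < w t
  hasDerivAt_asymFlux : ∀ t ∈ Ioo α β,
    HasDerivAt (fun s => asymFlux p a b (w' s)) (-(κ * w t ^ (p - 1))) t

/-- The field `F(w') v₊^p / w^(p-1)` of Picone's identity, where `F` is the asymmetric flux. -/
noncomputable def piconeField (p a b : ℝ) (w w' v : ℝ → ℝ) (t : ℝ) : ℝ :=
  asymFlux p a b (w' t) * (max (v t) 0 ^ p * w t ^ (1 - p))

theorem piconeField_of_nonpos {p : ℝ} (hp : p ≠ 0) (a b : ℝ) (w w' : ℝ → ℝ) {v : ℝ → ℝ} {t : ℝ}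
    (hv : v t ≤ 0) : piconeField p a b w w' v t = 0 := by
  rw [piconeField, max_eq_right hv, Real.zero_rpow hp, zero_mul, mul_zero]

namespace IsPosEigenfunction

variable {p a b κ α β : ℝ} {w w' v v' : ℝ → ℝ}

theorem nonneg (h : IsPosEigenfunction p a b κ α β w w') {t : ℝ} (ht : t ∈ Icc α β) :
    0 ≤ w t := by
  rcases eq_endpoints_or_mem_Ioo_of_mem_Icc ht with rfl | rfl | ht
  · exact h.left_eq_zero.ge
  · exact h.right_eq_zero.ge
  · exact (h.pos t ht).le

theorem reflect (h : IsPosEigenfunction p a b κ α β w w') :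
    IsPosEigenfunction p b a κ α β (fun t => w (α + β - t)) (fun t => -w' (α + β - t)) := by
  have hderiv (t : ℝ) : HasDerivAt (fun t => α + β - t) (-1) t :=
    (hasDerivAt_id t).const_sub (α + β)
  have hIcc : MapsTo (fun t => α + β - t) (Icc α β) (Icc α β) :=
    fun t ht => ⟨by linarith [ht.2], by linarith [ht.1]⟩
  have hIoo {t : ℝ} (ht : t ∈ Ioo α β) : α + β - t ∈ Ioo α β :=
    ⟨by linarith [ht.2], by linarith [ht.1]⟩
  refine ⟨?_, ?_, ?_, fun t ht => h.pos _ (hIoo ht), fun t ht => ?_⟩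
  · simpa only [neg_one_mul] using h.c1On.comp_of_deriv_const hderiv hIcc
  · rw [add_sub_cancel_left, h.right_eq_zero]
  · rw [add_sub_cancel_right, h.left_eq_zero]
  · simp only [asymFlux_neg_swap]
    exact ((h.hasDerivAt_asymFlux _ (hIoo ht)).comp t (hderiv t)).neg.congr_deriv (by ring)

theorem rescale (h : IsPosEigenfunction p a b κ α β w w') (hαβ : α < β) :
    IsPosEigenfunction p a b (κ * (β - α) ^ p) 0 1 (fun t => w (α + (β - α) * t))
      (fun t => (β - α) * w' (α + (β - α) * t)) := by
  have hl : 0 < β - α := sub_pos.2 hαβ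
  have hderiv (t : ℝ) : HasDerivAt (fun t => α + (β - α) * t) (β - α) t := by
    simpa using ((hasDerivAt_id t).const_mul (β - α)).const_add α
  have hIcc : MapsTo (fun t => α + (β - α) * t) (Icc 0 1) (Icc α β) :=
    fun t ht => ⟨by nlinarith [ht.1], by nlinarith [ht.2]⟩
  have hIoo {t : ℝ} (ht : t ∈ Ioo (0 : ℝ) 1) : α + (β - α) * t ∈ Ioo α β :=
    ⟨by nlinarith [ht.1], by nlinarith [ht.2]⟩
  refine ⟨h.c1On.comp_of_deriv_const hderiv hIcc, ?_, ?_, fun t ht => h.pos _ (hIoo ht),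
    fun t ht => ?_⟩
  · rw [mul_zero, add_zero, h.left_eq_zero]
  · rw [mul_one, add_sub_cancel, h.right_eq_zero]
  · simp only [asymFlux_mul hl.le]
    refine (((h.hasDerivAt_asymFlux _ (hIoo ht)).comp t (hderiv t)).const_mul _).congr_deriv ?_
    rw [← sub_add_cancel p 1, Real.rpow_add_one hl.ne', add_sub_cancel_right]
    ring

theorem hasDerivAt_piconeField (h : IsPosEigenfunction p a b κ α β w w') (hp : 1 < p)
    (hv : C1On α β v v') {t : ℝ} (ht : t ∈ Ioo α β) :
    HasDerivAt (piconeField p a b w w' v)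
      (asymTangent p a b (max (v t) 0 / w t * w' t) (v' t) - κ * max (v t) 0 ^ p) t := by
  have hw : 0 < w t := h.pos t ht
  have hm : 0 ≤ max (v t) 0 := le_max_right _ _
  have hnum := (hasDerivAt_max_zero_rpow hp (v t)).comp t (hv.hasDerivAt ht)
  have hden := (h.c1On.hasDerivAt ht).rpow_const (p := 1 - p) (Or.inl hw.ne')
  refine ((h.hasDerivAt_asymFlux t ht).mul (hnum.mul hden)).congr_deriv ?_
  have hcancel : w t ^ (p - 1) * w t ^ (1 - p) = 1 := by
    rw [← Real.rpow_add hw, sub_add_sub_cancel, sub_self, Real.rpow_zero]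
  have hratio (q : ℝ) : (max (v t) 0 / w t) ^ q = max (v t) 0 ^ q * w t ^ (-q) := by
    rw [Real.div_rpow hm hw.le, Real.rpow_neg hw.le, div_eq_mul_inv]
  simp only [asymTangent, asymFlux_mul (div_nonneg hm hw.le), asymE_mul (div_nonneg hm hw.le),
    hratio, ← asymFlux_mul_self hp, neg_sub, Function.comp_apply, Pi.mul_apply,
    show 1 - p - 1 = -p by ring]
  linear_combination -κ * max (v t) 0 ^ p * hcancel

theorem continuousOn_piconeField (h : IsPosEigenfunction p a b κ α β w w') (hp : 1 < p)
    (hv : C1On α β v v') (hvα : v α < 0) (hvβ : v β < 0) :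
    ContinuousOn (piconeField p a b w w' v) (Icc α β) := by
  intro t ht
  rcases lt_or_ge (v t) 0 with hneg | hnonneg
  · have hzero : piconeField p a b w w' v =ᶠ[𝓝[Icc α β] t] fun _ => 0 := by
      filter_upwards [(hv.continuousOn t ht).eventually_lt_const hneg] with s hs
      exact piconeField_of_nonpos (by linarith) a b w w' hs.le
    exact continuousWithinAt_const.congr_of_eventuallyEq hzero (hzero.self_of_nhdsWithin ht)
  · have ht' : t ∈ Ioo α β := by
      rcases eq_endpoints_or_mem_Ioo_of_mem_Icc ht with rfl | rfl | ht'
      · exact absurd hvα hnonneg.not_gt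
      · exact absurd hvβ hnonneg.not_gt
      · exact ht'
    exact (h.hasDerivAt_piconeField hp hv ht').continuousAt.continuousWithinAt

theorem mul_integral_max_abs_sub_rpow_le (h : IsPosEigenfunction p a b κ α β w w') (hp : 1 < p)
    (ha : 0 ≤ a) (hb : 0 ≤ b) (hαβ : α ≤ β) (hv : C1On α β v v') (hvα : v α = 0) (hvβ : v β = 0)
    {δ : ℝ} (hδ : 0 < δ) :
    κ * ∫ t in α..β, max (|v t| - δ) 0 ^ p ≤ ∫ t in α..β, asymE p a b (v' t) := by
  have hp0 : p ≠ 0 := by linarith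
  have hpos := hv.sub_const δ
  have hneg := hv.neg.sub_const δ
  have hE : ContinuousOn (fun t => asymE p a b (v' t)) (Icc α β) :=
    (continuous_asymE (by linarith)).comp_continuousOn hv.2
  have hM : ContinuousOn (fun t => κ * max (|v t| - δ) 0 ^ p) (Icc α β) :=
    continuousOn_const.mul ((continuous_max_zero_rpow (by linarith)).comp_continuousOn
      (hv.continuousOn.abs.sub continuousOn_const))
  have hderiv_le (t : ℝ) :
      asymTangent p a b (max (v t - δ) 0 / w t * w' t) (v' t) - κ * max (v t - δ) 0 ^ p +
        (asymTangent p b a (max (-v t - δ) 0 / w (α + β - t) * -w' (α + β - t)) (-v' t) -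
          κ * max (-v t - δ) 0 ^ p) ≤ asymE p a b (v' t) - κ * max (|v t| - δ) 0 ^ p := by
    rw [max_abs_sub_rpow hp0 hδ.le, sub_add_sub_comm, mul_add]
    refine sub_le_sub_right (asymTangent_add_asymTangent_swap_le hp ha hb ?_ _) _
    rcases le_total 0 (v t) with hs | hs
    · exact Or.inr (by rw [max_eq_right (by linarith), zero_div, zero_mul])
    · exact Or.inl (by rw [max_eq_right (by linarith), zero_div, zero_mul])
  have hpicone := intervalIntegral.sub_le_integral_of_hasDeriv_right_of_le hαβ
    ((h.continuousOn_piconeField hp hpos (by linarith) (by linarith)).add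
      (h.reflect.continuousOn_piconeField hp hneg (by linarith) (by linarith)))
    (fun t ht => ((h.hasDerivAt_piconeField hp hpos ht).add
      (h.reflect.hasDerivAt_piconeField hp hneg ht)).hasDerivWithinAt)
    (hE.sub hM).integrableOn_Icc (fun t _ => hderiv_le t)
  have hfield_zero (c d : ℝ) (z z' : ℝ → ℝ) {f : ℝ → ℝ} {t : ℝ} (hf : f t ≤ 0) :=
    piconeField_of_nonpos hp0 c d z z' hf
  simp only [Pi.add_apply, Pi.sub_apply] at hpicone
  rw [intervalIntegral.integral_sub (hE.intervalIntegrable_of_Icc hαβ)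
    (hM.intervalIntegrable_of_Icc hαβ), intervalIntegral.integral_const_mul,
    hfield_zero, hfield_zero, hfield_zero, hfield_zero] at hpicone <;> linarith

theorem mul_integral_abs_rpow_le (h : IsPosEigenfunction p a b κ α β w w') (hp : 1 < p)
    (ha : 0 ≤ a) (hb : 0 ≤ b) (hαβ : α ≤ β) (hv : C1On α β v v') (hvα : v α = 0)
    (hvβ : v β = 0) :
    κ * ∫ t in α..β, |v t| ^ p ≤ ∫ t in α..β, asymE p a b (v' t) := by
  refine le_of_tendsto
    ((tendsto_integral_max_abs_sub_rpow (by linarith) hαβ hv.continuousOn).const_mul κ) ?_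
  filter_upwards [self_mem_nhdsWithin] with δ hδ
  exact h.mul_integral_max_abs_sub_rpow_le hp ha hb hαβ hv hvα hvβ hδ

theorem integral_abs_rpow_pos (h : IsPosEigenfunction p a b κ α β w w') (hp : 0 ≤ p)
    (hαβ : α < β) : 0 < ∫ t in α..β, |w t| ^ p :=
  intervalIntegral.intervalIntegral_pos_of_pos_on
    ((h.c1On.continuousOn.abs.rpow_const fun _ _ => Or.inr hp).intervalIntegrable_of_Icc hαβ.le)
    (fun t ht => Real.rpow_pos_of_pos (abs_pos.2 (h.pos t ht).ne') p) hαβ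

theorem integral_asymE (h : IsPosEigenfunction p a b κ α β w w') (hp : 1 < p) (hαβ : α ≤ β) :
    ∫ t in α..β, asymE p a b (w' t) = κ * ∫ t in α..β, |w t| ^ p := by
  have hflux : ContinuousOn (fun t => asymFlux p a b (w' t)) (Icc α β) :=
    (continuous_asymFlux hp.le).comp_continuousOn h.c1On.2
  have hflux' : ContinuousOn (fun t => -(κ * w t ^ (p - 1))) (Icc α β) :=
    (continuousOn_const.mul (h.c1On.continuousOn.rpow_const fun _ _ => Or.inr (by linarith))).neg
  have hIoo : Ioo (min α β) (max α β) = Ioo α β := by rw [min_eq_left hαβ, max_eq_right hαβ]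
  rw [← uIcc_of_le hαβ] at hflux
  have hparts := intervalIntegral.integral_mul_deriv_eq_deriv_mul_of_hasDerivAt hflux
    (uIcc_of_le hαβ ▸ h.c1On.continuousOn) (hIoo ▸ h.hasDerivAt_asymFlux)
    (hIoo ▸ fun t => h.c1On.hasDerivAt (t := t))
    (hflux'.intervalIntegrable_of_Icc hαβ) (h.c1On.2.intervalIntegrable_of_Icc hαβ)
  simp only [asymFlux_mul_self hp, h.left_eq_zero, h.right_eq_zero, mul_zero, sub_zero,
    zero_sub] at hparts
  rw [hparts, ← intervalIntegral.integral_neg, ← intervalIntegral.integral_const_mul]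
  refine intervalIntegral.integral_congr fun t ht => ?_
  have hw : 0 ≤ w t := h.nonneg (uIcc_of_le hαβ ▸ ht)
  rw [abs_of_nonneg hw, ← sub_add_cancel p 1, Real.rpow_add_one' hw (by linarith),
    add_sub_cancel_right]
  ring

end IsPosEigenfunction

theorem Adm.exists_normalized {p a b L : ℝ} {v v' : ℝ → ℝ} (hv : Adm L v v') (hp : p ≠ 0)
    (hpos : 0 < ∫ t in (0 : ℝ)..L, |v t| ^ p) :
    ∃ z z' : ℝ → ℝ, Adm L z z' ∧ ∫ t in (0 : ℝ)..L, |z t| ^ p = 1 ∧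
      ∫ t in (0 : ℝ)..L, asymE p a b (z' t) =
        (∫ t in (0 : ℝ)..L, asymE p a b (v' t)) / ∫ t in (0 : ℝ)..L, |v t| ^ p := by
  set N := ∫ t in (0 : ℝ)..L, |v t| ^ p
  set c := (N⁻¹) ^ p⁻¹
  have hc : 0 ≤ c := by positivity
  have hcp : c ^ p = N⁻¹ := Real.rpow_inv_rpow (by positivity) hp
  refine ⟨fun t => c * v t, fun t => c * v' t, ⟨hv.1.const_mul c, ?_, ?_⟩, ?_, ?_⟩
  · simp only [hv.2.1, mul_zero]
  · simp only [hv.2.2, mul_zero]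
  · simp only [abs_mul, abs_of_nonneg hc, Real.mul_rpow hc (abs_nonneg _)]
    rw [intervalIntegral.integral_const_mul, hcp, inv_mul_cancel₀ hpos.ne']
  · simp only [asymE_mul hc]
    rw [intervalIntegral.integral_const_mul, hcp, inv_mul_eq_div]

namespace IsPosEigenfunction

variable {p a b κ : ℝ} {w w' : ℝ → ℝ}

theorem eq_lam1 {L : ℝ} (h : IsPosEigenfunction p a b κ 0 L w w') (hp : 1 < p) (ha : 0 ≤ a)
    (hb : 0 ≤ b) (hL : 0 < L) : κ = lam1 p a b L := by
  have hadm : Adm L w w' := ⟨h.c1On, h.left_eq_zero, h.right_eq_zero⟩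
  have hN := h.integral_abs_rpow_pos (by linarith) hL
  obtain ⟨z, z', hz, hnorm, hzE⟩ := hadm.exists_normalized (a := a) (b := b) (by linarith) hN
  rw [h.integral_asymE hp hL.le, mul_div_cancel_right₀ κ hN.ne'] at hzE
  refine (IsLeast.csInf_eq ?_).symm
  refine ⟨⟨z, z', hz, hnorm, hzE.symm⟩, ?_⟩
  rintro E ⟨v, v', hv, hv_norm, rfl⟩
  simpa only [hv_norm, mul_one] using
    h.mul_integral_abs_rpow_le hp ha hb hL.le hv.1 hv.2.1 hv.2.2

theorem mul_length_rpow_eq_lam1 {α β : ℝ} (h : IsPosEigenfunction p a b κ α β w w') (hp : 1 < p)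
    (ha : 0 ≤ a) (hb : 0 ≤ b) (hαβ : α < β) : κ * (β - α) ^ p = lam1 p a b 1 :=
  (h.rescale hαβ).eq_lam1 hp ha hb one_pos

end IsPosEigenfunction

namespace IsWeakSol

variable {p a b L μ ν : ℝ} {u u' : ℝ → ℝ}

theorem hasDerivAt_asymFlux_of_eigenvalue
    (h : IsWeakSol p a b L u u'
      fun t => μ * max (u t) 0 ^ (p - 1) - ν * max (-u t) 0 ^ (p - 1))
    (hp : 1 ≤ p) {t : ℝ} (ht : t ∈ Ioo 0 L) :
    HasDerivAt (fun s => asymFlux p a b (u' s))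
      (-(μ * max (u t) 0 ^ (p - 1) - ν * max (-u t) 0 ^ (p - 1))) t := by
  have hmax := continuous_max_zero_rpow (sub_nonneg.2 hp)
  have hu := h.1.1.continuousOn
  exact h.hasDerivAt_asymFlux hp (ht.1.trans ht.2)
    ((continuousOn_const.mul (hmax.comp_continuousOn hu)).sub
      (continuousOn_const.mul (hmax.comp_continuousOn hu.neg))) ht

variable {α β : ℝ}

theorem isPosEigenfunction_of_pos
    (h : IsWeakSol p a b L u u'
      fun t => μ * max (u t) 0 ^ (p - 1) - ν * max (-u t) 0 ^ (p - 1))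
    (hp : 1 < p) (hα : 0 ≤ α) (hβ : β ≤ L) (huα : u α = 0) (huβ : u β = 0)
    (hpos : ∀ t ∈ Ioo α β, 0 < u t) : IsPosEigenfunction p a b μ α β u u' := by
  refine ⟨h.1.1.mono (Icc_subset_Icc hα hβ), huα, huβ, hpos, fun t ht => ?_⟩
  have hflux := h.hasDerivAt_asymFlux_of_eigenvalue hp.le (Ioo_subset_Ioo hα hβ ht)
  have hut : 0 < u t := hpos t ht
  rwa [max_eq_left hut.le, max_eq_right (by linarith), Real.zero_rpow (by linarith), mul_zero,
    sub_zero] at hflux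

theorem neg
    (h : IsWeakSol p a b L u u'
      fun t => μ * max (u t) 0 ^ (p - 1) - ν * max (-u t) 0 ^ (p - 1)) :
    IsWeakSol p b a L (fun t => -u t) (fun t => -u' t)
      fun t => ν * max (-u t) 0 ^ (p - 1) - μ * max (- -u t) 0 ^ (p - 1) := by
  obtain ⟨⟨hC1, hu0, huL⟩, hweak⟩ := h
  refine ⟨⟨hC1.neg, neg_eq_zero.2 hu0, neg_eq_zero.2 huL⟩, fun φ φ' hφ => ?_⟩
  rw [← neg_inj, ← intervalIntegral.integral_neg, ← intervalIntegral.integral_neg]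
  simpa only [asymFlux_neg_swap, neg_mul, neg_neg, ← neg_mul, neg_sub] using hweak φ φ' hφ

end IsWeakSol

theorem stmt14 (p a b L μ ν : ℝ) (hp : 1 < p) (ha : 0 < a) (hb : 0 < b) (hL : 0 < L)
    (hμ : 0 < μ) (hν : 0 < ν) (u u' : ℝ → ℝ)
    (hsol : IsWeakSol p a b L u u'
      (fun t => μ * (max (u t) 0) ^ (p - 1) - ν * (max (-u t) 0) ^ (p - 1)))
    (hne : ∃ t ∈ Set.Icc (0:ℝ) L, u t ≠ 0) :
    (∀ α β : ℝ, 0 ≤ α → β ≤ L → α < β → u α = 0 → u β = 0 →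
      (∀ t ∈ Set.Ioo α β, 0 < u t) → μ * (β - α) ^ p = lam1 p a b 1) ∧
    (∀ α β : ℝ, 0 ≤ α → β ≤ L → α < β → u α = 0 → u β = 0 →
      (∀ t ∈ Set.Ioo α β, u t < 0) → ν * (β - α) ^ p = lam1 p a b 1) := by
  refine ⟨fun α β hα hβ hαβ huα huβ hpos => ?_, fun α β hα hβ hαβ huα huβ hneg => ?_⟩
  · exact (hsol.isPosEigenfunction_of_pos hp hα hβ huα huβ hpos).mul_length_rpow_eq_lam1
      hp ha.le hb.le hαβ
  · have hneg_u := hsol.neg.isPosEigenfunction_of_pos hp hα hβ (neg_eq_zero.2 huα)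
      (neg_eq_zero.2 huβ) fun t ht => neg_pos.2 (hneg t ht)
    exact hneg_u.reflect.mul_length_rpow_eq_lam1 hp ha.le hb.le hαβ
end
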